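/- If S is a weakly infinite dimensional subset of the separable Hilbert space ℓ², then the complement ℓ² \ S is locally connected. -/

import Mathlib

open Set

/-- A separator between `A` and `B` in a topological space: a closed set `L` whose
complement is the union of two disjoint open sets containing `A` and `B` respectively. -/
def IsSeparator {X : Type*} [TopologicalSpace X] (A B L : Set X) : Prop :=
  IsClosed L ∧ ∃ U V : Set X, IsOpen U ∧ IsOpen V ∧ Disjoint U V ∧
    A ⊆ U ∧ B ⊆ V ∧ Lᶜ = U ∪ V

/-- A family of pairs of sets is essential if every choice of separators has
nonempty intersection. -/
def IsEssentialFamily {X : Type*} [TopologicalSpace X] {Γ : Type*}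
    (A B : Γ → Set X) : Prop :=
  ∀ L : Γ → Set X, (∀ i, IsSeparator (A i) (B i) (L i)) → (⋂ i, L i).Nonempty

/-- A space is strongly infinite dimensional if it admits a countably infinite
essential family of pairs of disjoint closed subsets. -/
def StronglyInfiniteDimensional (X : Type*) [TopologicalSpace X] : Prop :=
  ∃ A B : ℕ → Set X,
    (∀ n, IsClosed (A n) ∧ IsClosed (B n) ∧ Disjoint (A n) (B n)) ∧
    IsEssentialFamily A B

/-- The separable Hilbert space `ℓ²` of square-summable real sequences. -/
abbrev EllTwo : Type := lp (fun _ : ℕ => ℝ) 2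

/-!
Brouwer's fixed point theorem comes from Scarf's combinatorial lemma on a fine grid in the simplex:
a room that misses a colour has exactly two doors, and every door leads to two rooms except for a
single door on the boundary, so by parity some room shows all colours. Brouwer makes the pairs of
opposite faces of a finite cube essential, and compactness passes to infinite cubes.

Restricting an essential family to a separator of one of its pairs leaves the other pairs essential.
Suppose that `C` is a convex open set for which `C \ S` falls into two relatively open pieces.
Since the space is infinite dimensional, a Hilbert cube can be placed inside `C` with one pair of
opposite faces in neighbourhoods of points of the two pieces. Then `S` contains the image of a
separator of these faces, and the remaining pairs of faces, which are detected by continuous linear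
functionals, make `S` strongly infinite dimensional. Hence balls minus `S` are connected.
-/

section Scarf

open scoped Finset

theorem card_filter_image_erase_eq {β γ : Type*} [DecidableEq β] [DecidableEq γ] {f : β → γ}
    {s : Finset β} (hs : #s = #(s.image f) + 1) :
    #{k ∈ s | (s.erase k).image f = s.image f} = 2 := by
  obtain ⟨i, hi, j, hj, hij, hfij⟩ := Finset.exists_ne_map_eq_of_card_lt_of_maps_to
    (show #(s.image f) < #s by lia) fun x hx => Finset.mem_image_of_mem f hx
  have image_erase {a b : β} (hb : b ∈ s) (hab : a ≠ b) (hfab : f a = f b) :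
      (s.erase a).image f = s.image f := by
    refine (Finset.image_subset_image (Finset.erase_subset a s)).antisymm
      (Finset.image_subset_iff.2 fun x hx => ?_)
    by_cases hxa : x = a
    · rw [hxa, hfab]
      exact Finset.mem_image_of_mem f (Finset.mem_erase.2 ⟨hab.symm, hb⟩)
    · exact Finset.mem_image_of_mem f (Finset.mem_erase.2 ⟨hxa, hx⟩)
  have injOn_erase {a : β} (ha : a ∈ s) (h : (s.erase a).image f = s.image f) :
      InjOn f (s.erase a) := by
    rw [← Finset.card_image_iff, h, Finset.card_erase_of_mem ha]
    lia
  have hi' := image_erase hj hij hfij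
  have hj' := image_erase hi hij.symm hfij.symm
  suffices h : {k ∈ s | (s.erase k).image f = s.image f} = {i, j} by rw [h, Finset.card_pair hij]
  ext k
  simp only [Finset.mem_filter, Finset.mem_insert, Finset.mem_singleton]
  refine ⟨fun ⟨hk, hk'⟩ => ?_, by rintro (rfl | rfl) <;> exact ⟨‹_›, ‹_›⟩⟩
  by_contra! hkij
  obtain ⟨l, hl, hlk⟩ := Finset.mem_image.1 (hk' ▸ Finset.mem_image_of_mem f hk)
  obtain ⟨hne, hl⟩ := Finset.mem_erase.1 hl
  by_cases hli : l = i
  · exact hne (injOn_erase hj hj' (by simp [hli, hij, hi]) (by simp [hk, hkij.2]) hlk)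
  · exact hne (injOn_erase hi hi' (by simp [hli, hl]) (by simp [hk, hkij.1]) hlk)

variable {I T α : Type*} [LinearOrder α] {r : I → T → α} {R τ : Finset T} {k l : I} {y z : T}

/-- Scarf's dominance: no point of `T` is strictly better than the worst member of `R` with
respect to all of the rankings `r i` at once. -/
def IsDominant (r : I → T → α) (R : Finset T) : Prop :=
  ∀ y, ∃ i, ∀ x ∈ R, r i y ≤ r i x

theorem IsDominant.anti (hR : IsDominant r R) (hτ : τ ⊆ R) : IsDominant r τ := fun y =>
  (hR y).imp fun _ hi x hx => hi x (hτ hx)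

/-- The points that beat the worst member of `τ` in every ranking except possibly `r k`. -/
def upperRegion (r : I → T → α) (τ : Finset T) (k : I) : Set T :=
  {y | ∀ l, l ≠ k → ∃ x ∈ τ, r l x < r l y}

/-- Every member of `τ` is already the worst one in some ranking other than `r k`. -/
def IsRedundant (r : I → T → α) (τ : Finset T) (k : I) : Prop :=
  ∀ x ∈ τ, ∃ l, l ≠ k ∧ ∀ z ∈ τ, r l x ≤ r l z

theorem IsDominant.le_of_mem_upperRegion (hτ : IsDominant r τ) (hz : z ∈ upperRegion r τ k) :
    ∀ x ∈ τ, r k z ≤ r k x := by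
  obtain ⟨l, hl⟩ := hτ z
  obtain rfl | hlk := eq_or_ne l k
  · exact hl
  · obtain ⟨x, hx, hxz⟩ := hz l hlk
    exact absurd (hl x hx) hxz.not_ge

theorem IsDominant.disjoint_upperRegion (hτ : IsDominant r τ) (hkl : k ≠ l) :
    Disjoint (upperRegion r τ k) (upperRegion r τ l) := Set.disjoint_left.2 fun y hyk hyl => by
  obtain ⟨x, hx, hxy⟩ := hyl k hkl
  exact (hτ.le_of_mem_upperRegion hyk x hx).not_gt hxy

theorem IsRedundant.notMem_of_mem_upperRegion (hk : IsRedundant r τ k)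
    (hy : y ∈ upperRegion r τ k) : y ∉ τ := fun hyτ => by
  obtain ⟨l, hlk, hl⟩ := hk y hyτ
  obtain ⟨x, hx, hxy⟩ := hy l hlk
  exact (hl x hx).not_gt hxy

theorem IsDominant.insert_of_forall_upperRegion_le [DecidableEq T] (hτ : IsDominant r τ)
    (hy : y ∈ upperRegion r τ k) (hmax : ∀ z ∈ upperRegion r τ k, r k z ≤ r k y) :
    IsDominant r (insert y τ) := fun z => by
  simp only [Finset.forall_mem_insert]
  by_cases hz : z ∈ upperRegion r τ k
  · exact ⟨k, hmax z hz, hτ.le_of_mem_upperRegion hz⟩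
  · simp only [upperRegion, mem_ofPred, not_forall, not_exists, not_and, not_lt] at hz
    obtain ⟨l, hlk, hz⟩ := hz
    obtain ⟨x, hx, hxy⟩ := hy l hlk
    exact ⟨l, (hz x hx).trans hxy.le, hz⟩

theorem IsRedundant.eq_of_forall_le [Fintype I] (hr : ∀ i, Function.Injective (r i))
    (hcard : #τ + 1 = Fintype.card I) (hk : IsRedundant r τ k) {x : T} (hx : x ∈ τ)
    {l l' : I} (hlk : l ≠ k) (hl : ∀ z ∈ τ, r l x ≤ r l z) (hlk' : l' ≠ k)
    (hl' : ∀ z ∈ τ, r l' x ≤ r l' z) : l = l' := by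
  classical
  choose m hmτ hmin using fun i => Finset.exists_min_image τ (r i) ⟨x, hx⟩
  have eq_min {i x} (hx : x ∈ τ) (h : ∀ z ∈ τ, r i x ≤ r i z) : m i = x :=
    hr i ((hmin i x hx).antisymm (h _ (hmτ i)))
  have himage : (Finset.univ.erase k).image m = τ := by
    refine (Finset.image_subset_iff.2 fun i _ => hmτ i).antisymm fun z hz => ?_
    obtain ⟨i, hik, hi⟩ := hk z hz
    exact Finset.mem_image.2 ⟨i, by simpa using hik, eq_min hz hi⟩
  have hinj : InjOn m (Finset.univ.erase k : Finset I) := by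
    rw [← Finset.card_image_iff, himage, Finset.card_erase_of_mem (Finset.mem_univ k),
      Finset.card_univ]
    lia
  exact hinj (by simpa using hlk) (by simpa using hlk') ((eq_min hx hl).trans (eq_min hx hl').symm)

open scoped Classical in
theorem IsDominant.card_isRedundant [Fintype I] (hr : ∀ i, Function.Injective (r i))
    (hτ : IsDominant r τ) (hne : τ.Nonempty) (hcard : #τ + 1 = Fintype.card I) :
    #{k | IsRedundant r τ k} = 2 := by
  choose m hmτ hmin using fun i => Finset.exists_min_image τ (r i) hne
  have min_eq {i x} (hx : x ∈ τ) : (∀ z ∈ τ, r i x ≤ r i z) ↔ m i = x :=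
    ⟨fun h => hr i ((hmin i x hx).antisymm (h _ (hmτ i))), by rintro rfl; exact hmin i⟩
  have himage : Finset.univ.image m = τ := by
    refine (Finset.image_subset_iff.2 fun i _ => hmτ i).antisymm fun x hx => ?_
    obtain ⟨i, hi⟩ := hτ x
    exact Finset.mem_image.2 ⟨i, Finset.mem_univ i, (min_eq hx).1 hi⟩
  have hcard_image : #(Finset.univ : Finset I) = #(Finset.univ.image m) + 1 := by
    rw [himage, Finset.card_univ, hcard]
  rw [← card_filter_image_erase_eq hcard_image]
  congr 1
  refine Finset.filter_congr fun k _ => ?_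
  rw [himage, subset_antisymm_iff, and_iff_right (Finset.image_subset_iff.2 fun i _ => hmτ i)]
  refine forall₂_congr fun x hx => ?_
  simp [min_eq hx]

theorem IsDominant.exists_isRedundant_of_insert [Fintype I] [DecidableEq T]
    (hr : ∀ i, Function.Injective (r i)) (hne : τ.Nonempty) (hcard : #τ + 1 = Fintype.card I)
    (hy : y ∉ τ) (hyτ : IsDominant r (insert y τ)) :
    ∃ k, IsRedundant r τ k ∧ y ∈ upperRegion r τ k ∧ ∀ z ∈ upperRegion r τ k, r k z ≤ r k y := by
  simp only [IsDominant, Finset.forall_mem_insert] at hyτ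
  obtain ⟨k, -, hk⟩ := hyτ y
  have ne_of_le {l x} (hx : x ∈ τ) (hxy : r l x ≤ r l y) : l ≠ k := by
    rintro rfl
    exact hy (hr l (hxy.antisymm (hk x hx)) ▸ hx)
  have hredundant : IsRedundant r τ k := fun x hx => by
    obtain ⟨l, hxy, hl⟩ := hyτ x
    exact ⟨l, ne_of_le hx hxy, hl⟩
  refine ⟨k, hredundant, fun l hlk => ?_, fun z hz => ?_⟩
  · obtain ⟨x, hx, hmin⟩ := Finset.exists_min_image τ (r l) hne
    obtain ⟨l', hxy, hl'⟩ := hyτ x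
    obtain rfl := hredundant.eq_of_forall_le hr hcard hx hlk hmin (ne_of_le hx hxy) hl'
    exact ⟨x, hx, hxy.lt_of_ne fun h => hy (hr l h ▸ hx)⟩
  · obtain ⟨l, hzy, hl⟩ := hyτ z
    obtain rfl | hlk := eq_or_ne l k
    · exact hzy
    · obtain ⟨x, hx, hxz⟩ := hz l hlk
      exact absurd (hl x hx) hxz.not_ge

open scoped Classical in
theorem IsDominant.card_insert_eq_card_isRedundant [Fintype I] [Fintype T] [DecidableEq T]
    (hr : ∀ i, Function.Injective (r i)) (hτ : IsDominant r τ) (hne : τ.Nonempty)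
    (hcard : #τ + 1 = Fintype.card I) :
    #{y | y ∉ τ ∧ IsDominant r (insert y τ)} =
      #{k | IsRedundant r τ k ∧ (upperRegion r τ k).Nonempty} := by
  have exists_max (k : I) (hk : (upperRegion r τ k).Nonempty) :
      ∃ y ∈ upperRegion r τ k, ∀ z ∈ upperRegion r τ k, r k z ≤ r k y :=
    Set.exists_max_image _ _ (Set.toFinite _) hk
  choose best hbest hmax using exists_max
  refine (Finset.card_bij (fun k hk => best k (Finset.mem_filter.1 hk).2.2) (fun k hk => ?_)
    (fun k hk l hl hkl => ?_) fun y hy => ?_).symm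
  · simp only [Finset.mem_filter, Finset.mem_univ, true_and] at hk ⊢
    exact ⟨hk.1.notMem_of_mem_upperRegion (hbest k hk.2),
      hτ.insert_of_forall_upperRegion_le (hbest k hk.2) (hmax k hk.2)⟩
  · simp only [Finset.mem_filter, Finset.mem_univ, true_and] at hk hl
    by_contra hne
    exact Set.disjoint_left.1 (hτ.disjoint_upperRegion hne) (hbest k hk.2) (hkl ▸ hbest l hl.2)
  · simp only [Finset.mem_filter, Finset.mem_univ, true_and] at hy
    obtain ⟨k, hk, hyk, hymax⟩ := hy.2.exists_isRedundant_of_insert hr hne hcard hy.1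
    have hk' : (upperRegion r τ k).Nonempty := ⟨y, hyk⟩
    exact ⟨k, by simpa using ⟨hk, hk'⟩, hr k ((hymax _ (hbest k hk')).antisymm (hmax k hk' y hyk))⟩

section RoomsAndDoors

variable [Fintype I] [DecidableEq I]

/-- A door: a dominant set of `Fintype.card I - 1` points showing every colour but `i₀`. -/
structure IsDoor (r : I → T → α) (c : T → I) (i₀ : I) (τ : Finset T) : Prop where
  isDominant : IsDominant r τ
  card_add_one : #τ + 1 = Fintype.card I
  image_eq : τ.image c = Finset.univ.erase i₀

/-- A room: a dominant set of `Fintype.card I` points showing every colour except possibly `i₀`. -/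
structure IsRoom (r : I → T → α) (c : T → I) (i₀ : I) (R : Finset T) : Prop where
  isDominant : IsDominant r R
  card_eq : #R = Fintype.card I
  subset_image : Finset.univ.erase i₀ ⊆ R.image c

variable {c : T → I} {i₀ : I}

open scoped Classical in
theorem IsRoom.card_isDoor [Fintype T] [DecidableEq T] (hR : IsRoom r c i₀ R)
    (hRc : R.image c ≠ Finset.univ) :
    #{τ | IsDoor r c i₀ τ ∧ τ ⊆ R} = 2 := by
  have himage : R.image c = Finset.univ.erase i₀ := by
    refine Finset.Subset.antisymm (Finset.subset_erase.2 ⟨Finset.subset_univ _, fun hi₀ => hRc ?_⟩)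
      hR.subset_image
    apply Finset.univ_subset_iff.1
    rw [← Finset.insert_erase (Finset.mem_univ i₀)]
    exact Finset.insert_subset hi₀ hR.subset_image
  have hcard : #R = #(R.image c) + 1 := by
    rw [himage, Finset.card_erase_add_one (Finset.mem_univ _), Finset.card_univ, hR.card_eq]
  rw [← card_filter_image_erase_eq hcard]
  refine (Finset.card_bij (fun x _ => R.erase x) (fun x hx => ?_) (fun x hx y hy => ?_)
    fun τ hτ => ?_).symm
  · rw [Finset.mem_filter] at hx
    refine Finset.mem_filter.2 ⟨Finset.mem_univ _, ⟨hR.isDominant.anti (Finset.erase_subset _ _),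
      ?_, hx.2.trans himage⟩, Finset.erase_subset _ _⟩
    rw [Finset.card_erase_add_one hx.1, hR.card_eq]
  · exact Finset.erase_injOn R (Finset.mem_filter.1 hx).1 (Finset.mem_filter.1 hy).1
  · obtain ⟨hdoor, hτR⟩ := (Finset.mem_filter.1 hτ).2
    obtain ⟨x, hx, rfl⟩ := Finset.exists_eq_insert_iff.2
      ⟨hτR, hdoor.card_add_one.trans hR.card_eq.symm⟩
    have herase := Finset.erase_insert hx
    refine ⟨x, Finset.mem_filter.2 ⟨Finset.mem_insert_self _ _, ?_⟩, herase⟩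
    rw [herase, hdoor.image_eq, himage]

open scoped Classical in
theorem IsDoor.card_isRoom [Fintype T] [DecidableEq T] (hτ : IsDoor r c i₀ τ) :
    #{R | IsRoom r c i₀ R ∧ τ ⊆ R} = #{y | y ∉ τ ∧ IsDominant r (insert y τ)} := by
  refine (Finset.card_bij (fun y _ => insert y τ) (fun y hy => ?_) (fun y hy z hz => ?_)
    fun R hR => ?_).symm
  · obtain ⟨hyτ, hdom⟩ := (Finset.mem_filter.1 hy).2
    refine Finset.mem_filter.2 ⟨Finset.mem_univ _, ⟨hdom, ?_, ?_⟩, Finset.subset_insert _ _⟩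
    · rw [Finset.card_insert_of_notMem hyτ, hτ.card_add_one]
    · rw [← hτ.image_eq]
      exact Finset.image_subset_image (Finset.subset_insert _ _)
  · exact Finset.insert_inj_on τ (Finset.mem_filter.1 hy).2.1 (Finset.mem_filter.1 hz).2.1
  · obtain ⟨hroom, hτR⟩ := (Finset.mem_filter.1 hR).2
    obtain ⟨y, hy, rfl⟩ := Finset.exists_eq_insert_iff.2
      ⟨hτR, hτ.card_add_one.trans hroom.card_eq.symm⟩
    exact ⟨y, Finset.mem_filter.2 ⟨Finset.mem_univ _, hy, hroom.isDominant⟩, rfl⟩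

theorem IsDoor.nonempty [Nontrivial I] (hτ : IsDoor r c i₀ τ) : τ.Nonempty := by
  have := Fintype.one_lt_card (α := I)
  have := hτ.card_add_one
  exact Finset.card_pos.1 (by lia)

open scoped Classical in
theorem IsDoor.card_isRoom_eq_card_isRedundant [Fintype T] [DecidableEq T] [Nontrivial I]
    (hr : ∀ i, Function.Injective (r i)) (hτ : IsDoor r c i₀ τ) :
    #{R | IsRoom r c i₀ R ∧ τ ⊆ R} = #{k | IsRedundant r τ k ∧ (upperRegion r τ k).Nonempty} :=
  hτ.card_isRoom.trans <|
    hτ.isDominant.card_insert_eq_card_isRedundant hr hτ.nonempty hτ.card_add_one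

end RoomsAndDoors

section Slack

variable {P : Type*} {r : I → P ⊕ I → α} {c : P ⊕ I → I} {i₀ : I} {τ : Finset (P ⊕ I)}

/-- Rankings of points `P` together with one slack element per index: the slack element of `k` is
the worst of all in the ranking `r k`, and the other slack elements beat all points of `P` there. -/
structure IsSlackRanking (r : I → P ⊕ I → α) : Prop where
  inr_lt : ∀ k y, y ≠ .inr k → r k (.inr k) < r k y
  inl_lt_inr : ∀ k i p, i ≠ k → r k (.inl p) < r k (.inr i)

theorem IsSlackRanking.inr_le (h : IsSlackRanking r) (k : I) (y : P ⊕ I) :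
    r k (.inr k) ≤ r k y := by
  obtain rfl | hy := eq_or_ne y (.inr k)
  exacts [le_rfl, (h.inr_lt k y hy).le]

variable [Fintype I] [DecidableEq I]

variable (P) in
/-- The slack elements of all indices but `i₀`: the only door on the boundary. -/
def slackDoor (i₀ : I) : Finset (P ⊕ I) :=
  (Finset.univ.erase i₀).map .inr

theorem mem_slackDoor {y : P ⊕ I} : y ∈ slackDoor P i₀ ↔ ∃ i, i ≠ i₀ ∧ .inr i = y := by
  simp [slackDoor]

theorem card_slackDoor_add_one : #(slackDoor P i₀) + 1 = Fintype.card I := by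
  rw [slackDoor, Finset.card_map, Finset.card_erase_add_one (Finset.mem_univ _), Finset.card_univ]

theorem IsSlackRanking.isDoor_slackDoor (h : IsSlackRanking r) (hc : ∀ i, c (.inr i) = i) :
    IsDoor r c i₀ (slackDoor P i₀) where
  isDominant
    | .inl p => ⟨i₀, fun x hx => by
        obtain ⟨i, hi, rfl⟩ := mem_slackDoor.1 hx
        exact (h.inl_lt_inr i₀ i p hi).le⟩
    | .inr i => ⟨i, fun x _ => h.inr_le i x⟩
  card_add_one := card_slackDoor_add_one
  image_eq := by
    ext i
    simp [slackDoor, hc]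

theorem IsSlackRanking.inr_mem_upperRegion (h : IsSlackRanking r) (hc : ∀ i, c (.inr i) = i)
    (hτ : IsDoor r c i₀ τ) (hne : τ ≠ slackDoor P i₀) (k : I) :
    .inr k ∈ upperRegion r τ k := fun l hl => by
  by_contra! hle
  have exists_inr {x} (hx : x ∈ τ) : ∃ i, i ≠ l ∧ .inr i = x := by
    rcases x with p | i
    · exact absurd (hle _ hx) (h.inl_lt_inr l k p hl.symm).not_ge
    · refine ⟨i, ?_, rfl⟩
      rintro rfl
      exact (hle _ hx).not_gt (h.inr_lt i _ (by simpa using hl.symm))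
  have hl₀ : l = i₀ := by
    by_contra hl₀
    obtain ⟨x, hx, rfl⟩ := Finset.mem_image.1 (hτ.image_eq ▸ Finset.mem_erase.2
      ⟨hl₀, Finset.mem_univ l⟩)
    obtain ⟨i, hi, rfl⟩ := exists_inr hx
    exact hi (hc i).symm
  subst hl₀
  refine hne (Finset.eq_of_subset_of_card_le (fun x hx => mem_slackDoor.2 (exists_inr hx)) ?_)
  have := hτ.card_add_one
  have := card_slackDoor_add_one (P := P) (i₀ := l)
  lia

theorem IsSlackRanking.isRedundant_slackDoor (h : IsSlackRanking r) :
    IsRedundant r (slackDoor P i₀) i₀ := fun x hx => by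
  obtain ⟨i, hi, rfl⟩ := mem_slackDoor.1 hx
  exact ⟨i, hi, fun z _ => h.inr_le i z⟩

theorem IsSlackRanking.inl_mem_upperRegion_slackDoor (h : IsSlackRanking r) (p : P) :
    .inl p ∈ upperRegion r (slackDoor P i₀) i₀ := fun l hl =>
  ⟨.inr l, mem_slackDoor.2 ⟨l, hl, rfl⟩, h.inr_lt l _ (by simp)⟩

theorem IsSlackRanking.upperRegion_slackDoor_eq_empty (h : IsSlackRanking r) {k : I} (hk : k ≠ i₀)
    (hkr : IsRedundant r (slackDoor P i₀) k) : upperRegion r (slackDoor P i₀) k = ∅ := by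
  refine Set.eq_empty_of_forall_notMem fun y hy => ?_
  obtain ⟨x, hx, hxy⟩ := hy i₀ hk.symm
  obtain ⟨i, hi, rfl⟩ := mem_slackDoor.1 hx
  rcases y with p | l
  · exact hxy.not_gt (h.inl_lt_inr i₀ i p hi)
  · obtain rfl : l = k := by
      by_contra hlk
      obtain ⟨x', -, hx'⟩ := hy l hlk
      exact (h.inr_le l x').not_gt hx'
    exact hkr.notMem_of_mem_upperRegion hy (mem_slackDoor.2 ⟨l, hk, rfl⟩)

open scoped Classical in
theorem IsSlackRanking.card_isRoom_slackDoor [Nontrivial I] [Fintype P] [DecidableEq P] [Nonempty P]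
    (h : IsSlackRanking r) (hr : ∀ i, Function.Injective (r i)) (hc : ∀ i, c (.inr i) = i) :
    #{R | IsRoom r c i₀ R ∧ slackDoor P i₀ ⊆ R} = 1 := by
  rw [(h.isDoor_slackDoor hc).card_isRoom_eq_card_isRedundant hr, Finset.card_eq_one]
  refine ⟨i₀, Finset.ext fun k => ?_⟩
  simp only [Finset.mem_filter, Finset.mem_univ, true_and, Finset.mem_singleton]
  refine ⟨fun ⟨hkr, hk⟩ => by_contra fun hne => ?_, ?_⟩
  · exact hk.ne_empty (h.upperRegion_slackDoor_eq_empty hne hkr)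
  · rintro rfl
    exact ⟨h.isRedundant_slackDoor, _, h.inl_mem_upperRegion_slackDoor (Classical.arbitrary P)⟩

open scoped Classical in
theorem IsSlackRanking.card_isRoom_of_ne_slackDoor [Nontrivial I] [Fintype P] [DecidableEq P]
    (h : IsSlackRanking r) (hr : ∀ i, Function.Injective (r i)) (hc : ∀ i, c (.inr i) = i)
    (hτ : IsDoor r c i₀ τ) (hne : τ ≠ slackDoor P i₀) : #{R | IsRoom r c i₀ R ∧ τ ⊆ R} = 2 := by
  rw [hτ.card_isRoom_eq_card_isRedundant hr,
    ← hτ.isDominant.card_isRedundant hr hτ.nonempty hτ.card_add_one]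
  congr 1
  exact Finset.filter_congr fun k _ =>
    and_iff_left ⟨_, h.inr_mem_upperRegion hc hτ hne k⟩

theorem IsSlackRanking.exists_isDominant_image_eq_univ_of_injective [Nontrivial I] [Finite P]
    [Nonempty P] (h : IsSlackRanking r) (hr : ∀ i, Function.Injective (r i))
    (hc : ∀ i, c (.inr i) = i) : ∃ R, IsDominant r R ∧ R.image c = Finset.univ := by
  classical
  cases nonempty_fintype P
  by_contra! hrainbow
  obtain ⟨i₀⟩ : Nonempty I := inferInstance
  let doors : Finset (Finset (P ⊕ I)) := {τ | IsDoor r c i₀ τ}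
  let rooms : Finset (Finset (P ⊕ I)) := {R | IsRoom r c i₀ R}
  have hslack : slackDoor P i₀ ∈ doors := by simpa [doors] using h.isDoor_slackDoor hc
  have hdoors : ∑ τ ∈ doors, #{R ∈ rooms | τ ⊆ R} = 1 + #(doors.erase (slackDoor P i₀)) * 2 := by
    rw [← Finset.add_sum_erase _ _ hslack, Finset.filter_filter, h.card_isRoom_slackDoor hr hc]
    congr 1
    refine Finset.sum_const_nat fun τ hτ => ?_
    rw [Finset.mem_erase, Finset.mem_filter] at hτ
    rw [Finset.filter_filter, h.card_isRoom_of_ne_slackDoor hr hc hτ.2.2 hτ.1]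
  have hrooms : ∑ R ∈ rooms, #{τ ∈ doors | τ ⊆ R} = #rooms * 2 :=
    Finset.sum_const_nat fun R hR => by
      have hR := (Finset.mem_filter.1 hR).2
      rw [Finset.filter_filter, hR.card_isDoor (hrainbow R hR.isDominant)]
  have hdouble : ∑ τ ∈ doors, #{R ∈ rooms | τ ⊆ R} = ∑ R ∈ rooms, #{τ ∈ doors | τ ⊆ R} :=
    Finset.sum_card_bipartiteAbove_eq_sum_card_bipartiteBelow
      (fun τ R : Finset (P ⊕ I) => τ ⊆ R)
  lia

theorem IsSlackRanking.exists_isDominant_image_eq_univ [Nontrivial I] [Finite P] [Nonempty P]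
    (h : IsSlackRanking r) (hc : ∀ i, c (.inr i) = i) :
    ∃ R, IsDominant r R ∧ R.image c = Finset.univ := by
  obtain ⟨n, ⟨code⟩⟩ := Finite.exists_equiv_fin (P ⊕ I)
  let strict : I → P ⊕ I → α ×ₗ Fin n := fun k y => toLex (r k y, code y)
  have strict_lt {k y z} (hyz : r k y < r k z) : strict k y < strict k z :=
    Prod.Lex.toLex_lt_toLex.2 (.inl hyz)
  have hstrict : IsSlackRanking strict :=
    ⟨fun k y hy => strict_lt (h.inr_lt k y hy), fun k i p hi => strict_lt (h.inl_lt_inr k i p hi)⟩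
  obtain ⟨R, hR, hRc⟩ := hstrict.exists_isDominant_image_eq_univ_of_injective
    (fun k y z hyz => code.injective (congrArg (fun w => (ofLex w).2) hyz)) hc
  refine ⟨R, fun y => (hR y).imp fun i hi x hx => ?_, hRc⟩
  exact not_lt.1 fun hlt => (hi x hx).not_gt (strict_lt hlt)

end Slack

end Scarf

section Grid

open scoped Finset

variable {I : Type*} [Fintype I] {K : ℕ}

variable (I K) in
/-- The points of the simplex with vertices indexed by `I` whose barycentric coordinates are
multiples of `1 / K`, stored with the denominator cleared. -/
abbrev GridPoint : Type _ := {p : I → ℕ // ∑ i, p i = K}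

instance : Finite (GridPoint I K) := by
  classical
  exact (Finset.finite_toSet (Finset.piAntidiag Finset.univ K)).subset
    (fun p hp => by simpa using hp : {p : I → ℕ | ∑ i, p i = K} ⊆ _)

instance [Nonempty I] : Nonempty (GridPoint I K) := by
  classical
  exact ⟨Pi.single (Classical.arbitrary I) K, by simp⟩

theorem lt_sum_add_one_of_forall_exists_le [Nonempty I] {C : Finset I} {ν : I → ℕ}
    (h : ∀ q : GridPoint I K, ∃ i ∈ C, q.1 i ≤ ν i) : K < ∑ i ∈ C, (ν i + 1) := by
  classical
  by_contra! hK
  obtain ⟨i₁⟩ := ‹Nonempty I›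
  obtain ⟨i, hi, hle⟩ := h ⟨fun i => (if i ∈ C then ν i + 1 else 0) +
    (if i = i₁ then K - ∑ i ∈ C, (ν i + 1) else 0), by
      rw [Finset.sum_add_distrib, Finset.sum_ite_eq', Finset.sum_ite_mem, Finset.univ_inter,
        if_pos (Finset.mem_univ i₁), Nat.add_sub_cancel' hK]⟩
  simp only [if_pos hi] at hle
  lia

theorem exists_forall_mem_Ico_of_forall_exists_le [Nonempty I] {σ : Finset (GridPoint I K)}
    (hσ : σ.Nonempty) {C : Finset I} (h : ∀ q : GridPoint I K, ∃ i ∈ C, ∀ p ∈ σ, q.1 i ≤ p.1 i) :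
    ∃ ν : I → ℕ, (∀ i ∉ C, ν i = 0) ∧ ∀ p ∈ σ, ∀ i, p.1 i ∈ Ico (ν i) (ν i + #C) := by
  classical
  choose m hmσ hm using fun i => σ.exists_min_image (fun p => p.1 i) hσ
  have hK := lt_sum_add_one_of_forall_exists_le (ν := fun i => (m i).1 i)
    fun q => (h q).imp fun i hi => ⟨hi.1, hi.2 _ (hmσ i)⟩
  rw [Finset.sum_add_distrib, Finset.sum_const, smul_eq_mul, mul_one] at hK
  let ν : I → ℕ := fun i => if i ∈ C then (m i).1 i else 0
  have hνsum : ∑ i, ν i = ∑ i ∈ C, (m i).1 i := by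
    rw [Finset.sum_ite_mem, Finset.univ_inter]
  have hν (p) (hp : p ∈ σ) (i : I) : ν i ≤ p.1 i := by
    by_cases hi : i ∈ C
    · simpa only [ν, if_pos hi] using hm i p hp
    · simp only [ν, if_neg hi, Nat.zero_le]
  refine ⟨ν, fun i hi => if_neg hi, fun p hp i => ⟨hν p hp i, ?_⟩⟩
  have hothers : ∑ j ∈ Finset.univ.erase i, ν j ≤ ∑ j ∈ Finset.univ.erase i, p.1 j :=
    Finset.sum_le_sum fun j _ => hν p hp j
  have hpsum := p.2
  rw [← Finset.add_sum_erase _ _ (Finset.mem_univ i)] at hνsum hpsum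
  lia

/-- Grid points are ranked by their `k`-th coordinate; the slack element of `k` is put below and
the other ones above all grid points. -/
def gridRanking [DecidableEq I] (k : I) : GridPoint I K ⊕ I → ℕ
  | .inl p => p.1 k + 1
  | .inr i => if i = k then 0 else K + 2

theorem isSlackRanking_gridRanking [DecidableEq I] :
    IsSlackRanking (gridRanking (I := I) (K := K)) where
  inr_lt k
    | .inl p, _ => by simp [gridRanking]
    | .inr i, hi => by
      have hik : i ≠ k := fun h => hi (congrArg _ h)
      simp [gridRanking, hik]
  inl_lt_inr k i p hi := by
    have hpk : p.1 k ≤ K := 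
      (Finset.single_le_sum_of_canonicallyOrdered (Finset.mem_univ k)).trans_eq p.2
    simp only [gridRanking, if_neg hi]
    lia

theorem exists_gridPoint_forall_le_or_exists_near_of_colour [Nontrivial I] (c : GridPoint I K → I) :
    ∃ x : GridPoint I K, ∀ i, x.1 i ≤ Fintype.card I ∨ ∃ x', c x' = i ∧
      ∀ j, x.1 j ≤ x'.1 j + Fintype.card I ∧ x'.1 j ≤ x.1 j + Fintype.card I := by
  classical
  obtain ⟨R, hR, hRc⟩ := isSlackRanking_gridRanking.exists_isDominant_image_eq_univ
    (P := GridPoint I K) (c := Sum.elim c id) fun i => rfl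
  let C : Finset I := R.toRightᶜ
  have exists_colour {i} (hi : i ∈ C) : ∃ p ∈ R.toLeft, c p = i := by
    obtain ⟨p | j, hy, rfl⟩ := Finset.mem_image.1 (hRc ▸ Finset.mem_univ i)
    · exact ⟨p, by simpa using hy, rfl⟩
    · simp [C, hy] at hi
  have hdom (q : GridPoint I K) : ∃ i ∈ C, ∀ p ∈ R.toLeft, q.1 i ≤ p.1 i := by
    obtain ⟨i, hi⟩ := hR (.inl q)
    refine ⟨i, ?_, fun p hp => by simpa [gridRanking] using hi _ (Finset.mem_toLeft.1 hp)⟩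
    simp only [C, Finset.mem_compl, Finset.mem_toRight]
    intro hiR
    simpa [gridRanking] using hi _ hiR
  obtain ⟨i₁, hi₁, -⟩ := hdom (Classical.arbitrary _)
  obtain ⟨x, hx, -⟩ := exists_colour hi₁
  obtain ⟨ν, hν, hIco⟩ := exists_forall_mem_Ico_of_forall_exists_le ⟨x, hx⟩ hdom
  have hcard : #C ≤ Fintype.card I := C.card_le_univ
  refine ⟨x, fun i => ?_⟩
  by_cases hi : i ∈ C
  · obtain ⟨x', hx', hcx'⟩ := exists_colour hi
    refine .inr ⟨x', hcx', fun j => ?_⟩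
    have hxj := hIco x hx j
    have hxj' := hIco x' hx' j
    rw [mem_Ico] at hxj hxj'
    lia
  · have := (hIco x hx i).2
    rw [hν i hi] at this
    exact .inl (by lia)

end Grid

section Brouwer

variable {I : Type*} [Fintype I] {K : ℕ}

/-- The point of the standard simplex represented by a grid point. -/
noncomputable def gridToSimplex (hK : 0 < K) (p : GridPoint I K) : stdSimplex ℝ I :=
  ⟨fun i => p.1 i / K, fun i => by positivity, by
    rw [← Finset.sum_div, ← Nat.cast_sum, p.2, div_self (by positivity)]⟩

theorem gridToSimplex_apply (hK : 0 < K) (p : GridPoint I K) (i : I) :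
    gridToSimplex hK p i = (p.1 i : ℝ) / K :=
  rfl

theorem dist_gridToSimplex_le (hK : 0 < K) {p q : GridPoint I K} {n : ℕ}
    (h : ∀ j, p.1 j ≤ q.1 j + n ∧ q.1 j ≤ p.1 j + n) :
    dist (gridToSimplex hK p) (gridToSimplex hK q) ≤ n / K := by
  rw [Subtype.dist_eq, dist_pi_le_iff (by positivity)]
  intro j
  have hpq : (p.1 j : ℝ) ≤ q.1 j + n := mod_cast (h j).1
  have hqp : (q.1 j : ℝ) ≤ p.1 j + n := mod_cast (h j).2
  have hdist : dist (gridToSimplex hK p j) (gridToSimplex hK q j) = |(p.1 j - q.1 j : ℝ)| / K := by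
    rw [Real.dist_eq, gridToSimplex_apply, gridToSimplex_apply, ← sub_div, abs_div, Nat.abs_cast]
  refine hdist.trans_le ?_
  gcongr
  exact abs_sub_le_iff.2 ⟨by linarith, by linarith⟩

theorem continuous_stdSimplex_apply (i : I) : Continuous fun x : stdSimplex ℝ I => x i :=
  (continuous_apply i).comp continuous_subtype_val

theorem stdSimplex_sub_le_dist (x y : stdSimplex ℝ I) (i : I) : x i - y i ≤ dist x y :=
  (le_abs_self _).trans (dist_le_pi_dist (x : I → ℝ) y i)

theorem exists_forall_sub_le_of_continuous [Nontrivial I] {f : stdSimplex ℝ I → stdSimplex ℝ I}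
    (hf : Continuous f) {ε : ℝ} (hε : 0 < ε) : ∃ x, ∀ i, x i - f x i ≤ ε := by
  obtain ⟨δ, hδ, hfδ⟩ := Metric.uniformContinuous_iff_le.1
    (CompactSpace.uniformContinuous_of_continuous hf) (ε / 2) (half_pos hε)
  have hη : 0 < min δ (ε / 2) := lt_min hδ (half_pos hε)
  obtain ⟨K, hKlt⟩ := exists_nat_gt (Fintype.card I / min δ (ε / 2))
  have hK : 0 < K := by
    have : (0 : ℝ) < K := lt_of_le_of_lt (by positivity) hKlt
    exact_mod_cast this
  have hmesh : (Fintype.card I / K : ℝ) ≤ min δ (ε / 2) :=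
    (div_le_iff₀ (by positivity)).2 ((div_lt_iff₀' hη).1 hKlt).le
  let g : GridPoint I K → stdSimplex ℝ I := gridToSimplex hK
  have exists_colour (p : GridPoint I K) : ∃ i, g p i ≤ f (g p) i := by
    obtain ⟨i, -, hi⟩ := Finset.exists_le_of_sum_le Finset.univ_nonempty
      ((stdSimplex.sum_eq_one (g p)).trans (stdSimplex.sum_eq_one (f (g p))).symm).le
    exact ⟨i, hi⟩
  choose c hc using exists_colour
  obtain ⟨x, hx⟩ := exists_gridPoint_forall_le_or_exists_near_of_colour c
  refine ⟨g x, fun i => ?_⟩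
  rcases hx i with hsmall | ⟨x', rfl, hnear⟩
  · have hxi : g x i ≤ Fintype.card I / K := by
      rw [gridToSimplex_apply]
      gcongr
    linarith [hmesh.trans (min_le_right _ _), stdSimplex.zero_le (f (g x)) i]
  · have hdist : dist (g x) (g x') ≤ min δ (ε / 2) := (dist_gridToSimplex_le hK hnear).trans hmesh
    have hfdist : dist (f (g x')) (f (g x)) ≤ ε / 2 := by
      rw [dist_comm]
      exact hfδ (hdist.trans (min_le_left _ _))
    linarith [stdSimplex_sub_le_dist (g x) (g x') (c x'), hdist.trans (min_le_right _ _), hc x',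
      stdSimplex_sub_le_dist (f (g x')) (f (g x)) (c x')]

theorem exists_fixedPoint_stdSimplex [Nonempty I] {f : stdSimplex ℝ I → stdSimplex ℝ I}
    (hf : Continuous f) : ∃ x, f x = x := by
  cases subsingleton_or_nontrivial I
  · exact ⟨Classical.arbitrary _, Subsingleton.elim _ _⟩
  let excess : stdSimplex ℝ I → ℝ := fun x =>
    Finset.univ.sup' Finset.univ_nonempty fun i => x i - f x i
  have hexcess : Continuous excess := Continuous.finset_sup'_apply _ fun i _ =>
    (continuous_stdSimplex_apply i).sub ((continuous_stdSimplex_apply i).comp hf)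
  obtain ⟨x, -, hmin⟩ := isCompact_univ.exists_isMinOn univ_nonempty hexcess.continuousOn
  have hx : excess x ≤ 0 := le_of_forall_pos_le_add fun ε hε => by
    obtain ⟨y, hy⟩ := exists_forall_sub_le_of_continuous hf hε
    rw [zero_add]
    exact (isMinOn_iff.1 hmin y (mem_univ y)).trans (Finset.sup'_le _ _ fun i _ => hy i)
  have hle (i : I) : x i ≤ f x i :=
    sub_nonpos.1 ((Finset.le_sup' (fun i => x i - f x i) (Finset.mem_univ i)).trans hx)
  have hsum : ∑ i, x i = ∑ i, f x i := by simp only [stdSimplex.sum_eq_one]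
  refine ⟨x, stdSimplex.ext (funext fun i => ?_)⟩
  exact ((Finset.sum_eq_sum_iff_of_le fun i _ => hle i).1 hsum i (Finset.mem_univ i)).symm

theorem exists_fixedPoint_unitCube {ι : Type*} [Finite ι]
    {F : (ι → unitInterval) → ι → unitInterval} (hF : Continuous F) : ∃ x, F x = x := by
  cases nonempty_fintype ι
  let N : ℝ := Fintype.card ι + 1
  have hN : 0 < N := by positivity
  have hsum (z : ι → unitInterval) : ∑ i, (z i : ℝ) ≤ N :=
    (Finset.sum_le_card_nsmul _ _ 1 fun i _ => (z i).2.2).trans (by simp [N])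
  let toSimplex (z : ι → unitInterval) : stdSimplex ℝ (Option ι) :=
    ⟨fun o => o.elim (1 - (∑ i, (z i : ℝ)) / N) fun i => z i / N, by
      rintro (_ | i)
      · exact sub_nonneg.2 ((div_le_one hN).2 (hsum z))
      · exact div_nonneg (z i).2.1 hN.le, by simp [Fintype.sum_option, ← Finset.sum_div]⟩
  let toCube (x : stdSimplex ℝ (Option ι)) (i : ι) : unitInterval :=
    projIcc 0 1 zero_le_one (N * x (some i))
  have toCube_toSimplex (z) : toCube (toSimplex z) = z := funext fun i => by
    have : N * toSimplex z (some i) = z i := mul_div_cancel₀ _ hN.ne'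
    simp only [toCube, this, projIcc_val]
  have toSimplex_continuous : Continuous toSimplex := by
    refine Continuous.subtype_mk (continuous_pi ?_) _
    rintro (_ | i) <;> dsimp <;> fun_prop
  have toCube_continuous : Continuous toCube := continuous_pi fun i =>
    continuous_projIcc.comp ((continuous_stdSimplex_apply (some i)).const_mul N)
  obtain ⟨x, hx⟩ := exists_fixedPoint_stdSimplex
    (toSimplex_continuous.comp (hF.comp toCube_continuous))
  exact ⟨toCube x, (toCube_toSimplex _).symm.trans (congrArg toCube hx)⟩

end Brouwer

section EssentialFamily

variable {X Y Γ : Type*} [TopologicalSpace X] [TopologicalSpace Y]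

theorem IsSeparator.of_isOpen {A B U V : Set X} (hU : IsOpen U) (hV : IsOpen V)
    (hUV : Disjoint U V) (hAU : A ⊆ U) (hBV : B ⊆ V) : IsSeparator A B (U ∪ V)ᶜ :=
  ⟨(hU.union hV).isClosed_compl, U, V, hU, hV, hUV, hAU, hBV, compl_compl _⟩

theorem IsSeparator.preimage {A B L : Set X} {A' B' : Set Y} {f : Y → X}
    (hL : IsSeparator A B L) (hf : Continuous f) (hA : MapsTo f A' A) (hB : MapsTo f B' B) :
    IsSeparator A' B' (f ⁻¹' L) := by
  obtain ⟨hLc, U, V, hU, hV, hUV, hAU, hBV, hLUV⟩ := hL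
  refine ⟨hLc.preimage hf, f ⁻¹' U, f ⁻¹' V, hU.preimage hf, hV.preimage hf, hUV.preimage f,
    fun y hy => hAU (hA hy), fun y hy => hBV (hB hy), ?_⟩
  rw [← preimage_compl, hLUV, preimage_union]

theorem IsEssentialFamily.of_mapsTo {A' B' : Γ → Set Y} {A B : Γ → Set X} {f : Y → X}
    (h : IsEssentialFamily A' B') (hf : Continuous f) (hA : ∀ i, MapsTo f (A' i) (A i))
    (hB : ∀ i, MapsTo f (B' i) (B i)) : IsEssentialFamily A B := fun L hL => by
  obtain ⟨y, hy⟩ := h _ fun i => (hL i).preimage hf (hA i) (hB i)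
  rw [← preimage_iInter] at hy
  exact ⟨f y, hy⟩

theorem disjoint_closure_image_union {K A B : Set X} (hK : IsClosed K) (hA : IsClosed A)
    (hAB : Disjoint A B) {U V : Set K} (hV : IsOpen V) (hUV : Disjoint U V)
    (hAU : (↑) ⁻¹' A ⊆ U) (hBV : (↑) ⁻¹' B ⊆ V) :
    Disjoint (closure ((↑) '' U ∪ A)) ((↑) '' V ∪ B) := by
  have hclosure : Disjoint (closure U) V := hUV.closure_left hV
  rw [closure_union, hA.closure_eq, hK.isClosedEmbedding_subtypeVal.closure_image_eq,
    disjoint_union_left, disjoint_union_right, disjoint_union_right]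
  refine ⟨⟨(disjoint_image_iff Subtype.val_injective).2 hclosure, ?_⟩, ?_, hAB⟩
  · rw [disjoint_image_left]
    exact hclosure.mono_right hBV
  · rw [disjoint_image_right]
    exact hUV.mono_left hAU

theorem IsSeparator.exists_extension [CompletelyNormalSpace X] {K A B : Set X} {L : Set K}
    (hL : IsSeparator ((↑) ⁻¹' A) ((↑) ⁻¹' B) L) (hK : IsClosed K) (hA : IsClosed A)
    (hB : IsClosed B) (hAB : Disjoint A B) :
    ∃ L' : Set X, IsSeparator A B L' ∧ (↑) ⁻¹' L' ⊆ L := by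
  obtain ⟨-, U, V, hU, hV, hUV, hAU, hBV, hLUV⟩ := hL
  obtain ⟨U', V', hU', hV', hUU', hVV', hUV'⟩ :
      SeparatedNhds ((↑) '' U ∪ A : Set X) ((↑) '' V ∪ B) :=
    separatedNhds_iff_disjoint.2 <| completely_normal
      (disjoint_closure_image_union hK hA hAB hV hUV hAU hBV)
      (disjoint_closure_image_union hK hB hAB.symm hU hUV.symm hBV hAU).symm
  refine ⟨(U' ∪ V')ᶜ, .of_isOpen hU' hV' hUV' (subset_union_right.trans hUU')
    (subset_union_right.trans hVV'), ?_⟩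
  rw [preimage_compl, compl_subset_comm, hLUV]
  exact union_subset_union (fun x hx => hUU' (.inl ⟨x, hx, rfl⟩))
    fun x hx => hVV' (.inl ⟨x, hx, rfl⟩)

theorem IsEssentialFamily.restrict_separator [CompletelyNormalSpace X] {A B : Option Γ → Set X}
    (h : IsEssentialFamily A B) (hA : ∀ i, IsClosed (A (some i)))
    (hB : ∀ i, IsClosed (B (some i))) (hAB : ∀ i, Disjoint (A (some i)) (B (some i)))
    {K : Set X} (hK : IsSeparator (A none) (B none) K) :
    IsEssentialFamily (fun i => ((↑) ⁻¹' A (some i) : Set K)) (fun i => (↑) ⁻¹' B (some i)) := by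
  intro L hL
  choose L' hL' hLL' using fun i => (hL i).exists_extension hK.1 (hA i) (hB i) (hAB i)
  obtain ⟨x, hx⟩ := h (fun o => o.elim K L') (by rintro (_ | i); exacts [hK, hL' i])
  rw [mem_iInter] at hx
  exact ⟨⟨x, hx none⟩, mem_iInter.2 fun i => hLL' i (hx (some i))⟩

theorem exists_disjoint_isOpen_of_not_isPreconnected [CompletelyNormalSpace X] {s : Set X}
    (hs : ¬ IsPreconnected s) :
    ∃ U V : Set X, IsOpen U ∧ IsOpen V ∧ Disjoint U V ∧ s ⊆ U ∪ V ∧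
      (s ∩ U).Nonempty ∧ (s ∩ V).Nonempty := by
  simp only [IsPreconnected, not_forall, not_nonempty_iff_eq_empty] at hs
  obtain ⟨u, v, hu, hv, hcover, ⟨p, hps, hpu⟩, ⟨q, hqs, hqv⟩, hsuv⟩ := hs
  have hdisj : ∀ z ∈ s, z ∈ u → z ∉ v := fun z hz hzu hzv =>
    eq_empty_iff_forall_notMem.1 hsuv z ⟨hz, hzu, hzv⟩
  have hclosure_left : Disjoint (closure (s ∩ u)) (s ∩ v) :=
    (Disjoint.closure_left (disjoint_left.2 fun z hz => hdisj z hz.1 hz.2) hv).mono_right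
      inter_subset_right
  have hclosure_right : Disjoint (s ∩ u) (closure (s ∩ v)) :=
    (Disjoint.closure_right (disjoint_right.2 fun z hz hzu => hdisj z hz.1 hzu hz.2) hu).mono_left
      inter_subset_right
  obtain ⟨U, V, hU, hV, huU, hvV, hUV⟩ :=
    separatedNhds_iff_disjoint.2 (completely_normal hclosure_left hclosure_right)
  exact ⟨U, V, hU, hV, hUV,
    fun z hz => (hcover hz).imp (fun h => huU ⟨hz, h⟩) fun h => hvV ⟨hz, h⟩,
    ⟨p, hps, huU ⟨hps, hpu⟩⟩, ⟨q, hqs, hvV ⟨hqs, hqv⟩⟩⟩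

end EssentialFamily

section Cube

theorem IsSeparator.exists_continuous_real {X : Type*} [PseudoMetricSpace X] {A B L : Set X}
    (hL : IsSeparator A B L) (hA : A.Nonempty) (hB : B.Nonempty) :
    ∃ g : X → ℝ, Continuous g ∧ (∀ x ∈ A, 0 ≤ g x) ∧ (∀ x ∈ B, g x ≤ 0) ∧
      ∀ x, g x = 0 → x ∈ L := by
  obtain ⟨-, U, V, hU, hV, hUV, hAU, hBV, hLUV⟩ := hL
  have infDist_V {x} (hx : x ∈ U) : Metric.infDist x Vᶜ = 0 :=
    Metric.infDist_zero_of_mem (disjoint_left.1 hUV hx)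
  have infDist_U {x} (hx : x ∈ V) : Metric.infDist x Uᶜ = 0 :=
    Metric.infDist_zero_of_mem (disjoint_right.1 hUV hx)
  refine ⟨fun x => Metric.infDist x Uᶜ - Metric.infDist x Vᶜ,
    (Metric.continuous_infDist_pt _).sub (Metric.continuous_infDist_pt _),
    fun x hx => by simp [infDist_V (hAU hx), Metric.infDist_nonneg],
    fun x hx => by simp [infDist_U (hBV hx), Metric.infDist_nonneg], fun x hx => ?_⟩
  by_contra hxL
  rcases (hLUV ▸ hxL : x ∈ U ∪ V) with hxU | hxV
  · have hne : (Uᶜ).Nonempty := hB.mono fun y hy => disjoint_right.1 hUV (hBV hy)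
    refine (hU.isClosed_compl.mem_iff_infDist_zero hne).2 ?_ hxU
    linarith [infDist_V hxU]
  · have hne : (Vᶜ).Nonempty := hA.mono fun y hy => disjoint_left.1 hUV (hAU hy)
    refine (hV.isClosed_compl.mem_iff_infDist_zero hne).2 ?_ hxV
    linarith [infDist_U hxV]

theorem poincare_miranda {ι : Type*} [Finite ι] {g : ι → (ι → unitInterval) → ℝ}
    (hg : ∀ i, Continuous (g i)) (hg0 : ∀ i x, x i = 0 → 0 ≤ g i x)
    (hg1 : ∀ i x, x i = 1 → g i x ≤ 0) : ∃ x, ∀ i, g i x = 0 := by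
  obtain ⟨x, hx⟩ := exists_fixedPoint_unitCube
    (F := fun x i => projIcc 0 1 zero_le_one ((x i : ℝ) + g i x)) (by fun_prop)
  refine ⟨x, fun i => ?_⟩
  have hxi : max 0 (min 1 ((x i : ℝ) + g i x)) = x i := congrArg Subtype.val (congrFun hx i)
  rcases lt_trichotomy (g i x) 0 with hneg | hzero | hpos
  · have hxi0 : (x i : ℝ) = 0 := by
      grind [(x i).2.1]
    exact absurd (hg0 i x (Subtype.ext hxi0)) hneg.not_ge
  · exact hzero
  · have hxi1 : (x i : ℝ) = 1 := by
      grind [(x i).2.2]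
    exact absurd (hg1 i x (Subtype.ext hxi1)) hpos.not_ge

theorem isEssentialFamily_faces_of_finite (ι : Type*) [Finite ι] :
    IsEssentialFamily (fun i : ι => {x : ι → unitInterval | x i = 0})
      (fun i => {x | x i = 1}) := by
  cases nonempty_fintype ι
  intro L hL
  choose g hg hg0 hg1 hgL using fun i => (hL i).exists_continuous_real ⟨0, rfl⟩ ⟨1, rfl⟩
  obtain ⟨x, hx⟩ := poincare_miranda hg hg0 hg1
  exact ⟨x, mem_iInter.2 fun i => hgL i x (hx i)⟩

theorem isEssentialFamily_faces (ι : Type*) :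
    IsEssentialFamily (fun i : ι => {x : ι → unitInterval | x i = 0})
      (fun i => {x | x i = 1}) := by
  classical
  intro L hL
  refine CompactSpace.iInter_nonempty (fun i => (hL i).1) fun s => ?_
  let extendZero : (s → unitInterval) → ι → unitInterval := fun y i =>
    if hi : i ∈ s then y ⟨i, hi⟩ else 0
  have hcont : Continuous extendZero := continuous_pi fun i => by
    by_cases hi : i ∈ s <;> simp only [extendZero, hi, dite_true, dite_false] <;> fun_prop
  have hextend (y : s → unitInterval) (i : s) : extendZero y i = y i := dif_pos i.2
  have hfaces := (isEssentialFamily_faces_of_finite s).of_mapsTo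
    (A := fun i : s => {x : ι → unitInterval | x i = 0})
    (B := fun i : s => {x : ι → unitInterval | x i = 1}) hcont
    (fun i y hy => (hextend y i).trans hy) (fun i y hy => (hextend y i).trans hy)
  simpa only [iInter_subtype] using hfaces (fun i => L i) fun i => hL i

end Cube

section BanachSpace

variable {E : Type*} [NormedAddCommGroup E] [NormedSpace ℝ E]

theorem exists_norm_eq_one_and_dual_eq_one (hE : ¬ FiniteDimensional ℝ E) (W : Submodule ℝ E)
    [FiniteDimensional ℝ W] (F : Finset (StrongDual ℝ E)) :
    ∃ (e : E) (f : StrongDual ℝ E), ‖e‖ = 1 ∧ f e = 1 ∧ (∀ g ∈ F, g e = 0) ∧ ∀ w ∈ W, f w = 0 := by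
  obtain ⟨P, hP⟩ := Submodule.ClosedComplemented.of_finiteDimensional W
  let T : E →ₗ[ℝ] W × (F → ℝ) := P.toLinearMap.prod (LinearMap.pi fun g => g.1.toLinearMap)
  obtain ⟨v, hv, hv0⟩ : ∃ v ∈ LinearMap.ker T, v ≠ 0 :=
    (Submodule.ne_bot_iff _).1 fun hker =>
      hE (FiniteDimensional.of_injective T (LinearMap.ker_eq_bot.1 hker))
  obtain ⟨hPv, hFv⟩ : P v = 0 ∧ ∀ g ∈ F, g v = 0 := by
    simpa [T, funext_iff] using hv
  obtain ⟨f, hf⟩ := SeparatingDual.exists_eq_one (R := ℝ) hv0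
  refine ⟨‖v‖⁻¹ • v, ‖v‖ • f.comp (.id ℝ E - W.subtypeL.comp P), norm_smul_inv_norm hv0,
    ?_, fun g hg => by simp [hFv g hg], fun w hw => by simp [hP ⟨w, hw⟩]⟩
  simp [hPv, hf, hv0]

theorem exists_biorthogonal_seq (hE : ¬ FiniteDimensional ℝ E) (d : E) :
    ∃ (e : ℕ → E) (f : ℕ → StrongDual ℝ E), (∀ i, ‖e i‖ = 1 ∧ f i (e i) = 1 ∧ f i d = 0) ∧
      ∀ i j, i ≠ j → f i (e j) = 0 := by
  classical
  let r : E × StrongDual ℝ E → E × StrongDual ℝ E → Prop :=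
    fun a b => a.2 b.1 = 0 ∧ b.2 a.1 = 0
  have : Std.Symm r := ⟨fun _ _ => And.symm⟩
  obtain ⟨a, ha, har⟩ := exists_seq_of_forall_finset_exists'
    (fun a : E × StrongDual ℝ E => ‖a.1‖ = 1 ∧ a.2 a.1 = 1 ∧ a.2 d = 0) r fun s _ => by
      let vectors : Finset E := insert d (s.image Prod.fst)
      obtain ⟨e, f, he, hfe, hge, hfw⟩ := exists_norm_eq_one_and_dual_eq_one hE
        (Submodule.span ℝ vectors) (s.image Prod.snd)
      have hf {w} (hw : w ∈ vectors) : f w = 0 := hfw w (Submodule.subset_span hw)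
      refine ⟨(e, f), ⟨he, hfe, hf (Finset.mem_insert_self _ _)⟩, fun x hx =>
        ⟨hge _ (Finset.mem_image_of_mem _ hx), hf ?_⟩⟩
      exact Finset.mem_insert_of_mem (Finset.mem_image_of_mem _ hx)
  exact ⟨fun i => (a i).1, fun i => (a i).2, ha, fun i j hij => (har hij).1⟩

theorem exists_hilbertCube [CompleteSpace E] (hE : ¬ FiniteDimensional ℝ E) (d : E) {δ : ℝ}
    (hδ : 0 < δ) :
    ∃ (w : (ℕ → unitInterval) → E) (f : ℕ → StrongDual ℝ E), Continuous w ∧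
      (∀ a, ‖w a‖ < δ) ∧ (∀ i, f i d = 0) ∧ ∀ a i, f i (w a) = a i := by
  obtain ⟨e, f, hef, hoff⟩ := exists_biorthogonal_seq hE d
  let c : ℕ → ℝ := fun i => δ / 2 / 2 / 2 ^ i
  have hc (i : ℕ) : 0 < c i := by positivity
  have hcsum : HasSum c (δ / 2) := hasSum_geometric_two' (δ / 2)
  let u : ℕ → (ℕ → unitInterval) → E := fun i a => (a i * c i : ℝ) • e i
  have hu (i : ℕ) (a) : ‖u i a‖ ≤ c i := by
    rw [norm_smul, (hef i).1, mul_one, Real.norm_of_nonneg (mul_nonneg (a i).2.1 (hc i).le)]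
    exact mul_le_of_le_one_left (hc i).le (a i).2.2
  refine ⟨fun a => ∑' i, u i a, fun i => (c i)⁻¹ • f i,
    continuous_tsum (fun i => by fun_prop) hcsum.summable hu,
    fun a => (tsum_of_norm_bounded hcsum fun i => hu i a).trans_lt (half_lt_self hδ),
    fun i => by simp [(hef i).2.2], fun a i => ?_⟩
  have hsum : Summable fun j => u j a := .of_norm_bounded hcsum.summable fun j => hu j a
  rw [ContinuousLinearMap.map_tsum _ hsum, tsum_eq_single i fun j hj => ?_]
  · simp [u, (hef i).2.1, mul_comm, (hc i).ne']
  · simp [u, hoff i j hj.symm]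

theorem exists_hilbertCube_joining [CompleteSpace E] (hE : ¬ FiniteDimensional ℝ E)
    {C U V : Set E} (hC : Convex ℝ C) {p q : E} (hU : C ∩ U ∈ nhds p) (hV : C ∩ V ∈ nhds q) :
    ∃ (φ : (Option ℕ → unitInterval) → E) (f : ℕ → StrongDual ℝ E), Continuous φ ∧
      (∀ a, φ a ∈ C) ∧ (∀ a, a none = 0 → φ a ∈ U) ∧ (∀ a, a none = 1 → φ a ∈ V) ∧
      ∀ a i, f i (φ a) = f i p + a (some i) := by
  obtain ⟨ε, hε, hεU⟩ := Metric.mem_nhds_iff.1 hU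
  obtain ⟨ε', hε', hεV⟩ := Metric.mem_nhds_iff.1 hV
  obtain ⟨w, f, hw, hwε, hfd, hfw⟩ := exists_hilbertCube hE (q - p) (lt_min hε hε')
  have hpw (a) : p + w a ∈ C ∩ U := hεU <| by
    simpa using (hwε a).trans_le (min_le_left _ _)
  have hqw (a) : q + w a ∈ C ∩ V := hεV <| by
    simpa using (hwε a).trans_le (min_le_right _ _)
  refine ⟨fun a => AffineMap.lineMap (p + w fun i => a (some i)) (q + w fun i => a (some i))
    (a none : ℝ), f, ?_, fun a => ?_, fun a ha => ?_, fun a ha => ?_, fun a i => ?_⟩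
  · simp only [AffineMap.lineMap_apply_module]
    fun_prop
  · exact hC.lineMap_mem (hpw _).1 (hqw _).1 (a none).2
  · simpa [ha] using (hpw _).2
  · simpa [ha] using (hqw _).2
  · have hpq : f i q = f i p := by simpa [sub_eq_zero] using hfd i
    simp only [AffineMap.lineMap_apply_module, smul_add, map_add, map_smul, smul_eq_mul, hfw, hpq]
    ring

theorem stronglyInfiniteDimensional_of_separates_convex [CompleteSpace E]
    (hE : ¬ FiniteDimensional ℝ E) {S C U V : Set E} (hC : Convex ℝ C) (hCo : IsOpen C)
    (hU : IsOpen U) (hV : IsOpen V) (hUV : Disjoint U V) (hcover : C \ S ⊆ U ∪ V)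
    (hCU : (C ∩ U).Nonempty) (hCV : (C ∩ V).Nonempty) : StronglyInfiniteDimensional S := by
  obtain ⟨p, hp⟩ := hCU
  obtain ⟨q, hq⟩ := hCV
  obtain ⟨φ, f, hφ, hφC, hφU, hφV, hfφ⟩ := exists_hilbertCube_joining hE hC
    ((hCo.inter hU).mem_nhds hp) ((hCo.inter hV).mem_nhds hq)
  have hsep : IsSeparator {a | a none = 0} {a | a none = 1} (φ ⁻¹' (U ∪ V)ᶜ) :=
    (IsSeparator.of_isOpen hU hV hUV subset_rfl subset_rfl).preimage hφ hφU hφV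
  have hess := (isEssentialFamily_faces (Option ℕ)).restrict_separator
    (fun i => isClosed_eq (continuous_apply (some i)) continuous_const)
    (fun i => isClosed_eq (continuous_apply (some i)) continuous_const)
    (fun i => disjoint_left.2 fun a h0 h1 => zero_ne_one (h0.symm.trans h1)) hsep
  have hφS (a : φ ⁻¹' (U ∪ V)ᶜ) : φ a ∈ S := by_contra fun h => a.2 (hcover ⟨hφC a, h⟩)
  refine ⟨fun i => {x | f i x ≤ f i p}, fun i => {x | f i p + 1 ≤ f i x}, fun i =>
    ⟨isClosed_le (by fun_prop) continuous_const, isClosed_le continuous_const (by fun_prop),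
      disjoint_left.2 fun x h0 h1 => ?_⟩,
    hess.of_mapsTo (f := fun a : φ ⁻¹' (U ∪ V)ᶜ => (⟨φ a, hφS a⟩ : S)) (by fun_prop)
      (fun i a ha => ?_) fun i a ha => ?_⟩
  · linarith [mem_ofPred.1 h0, mem_ofPred.1 h1]
  · have hai : a.1 (some i) = 0 := ha
    simp [hfφ, hai]
  · have hai : a.1 (some i) = 1 := ha
    simp [hfφ, hai]

theorem isPreconnected_diff_of_weaklyInfiniteDimensional [CompleteSpace E]
    (hE : ¬ FiniteDimensional ℝ E) {S C : Set E} (hC : Convex ℝ C) (hCo : IsOpen C)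
    (hS : ¬ StronglyInfiniteDimensional S) : IsPreconnected (C \ S) := by
  by_contra hCS
  obtain ⟨U, V, hU, hV, hUV, hcover, hCU, hCV⟩ :=
    exists_disjoint_isOpen_of_not_isPreconnected hCS
  exact hS <| stronglyInfiniteDimensional_of_separates_convex hE hC hCo hU hV hUV hcover
    (hCU.mono (inter_subset_inter_left _ sdiff_subset))
    (hCV.mono (inter_subset_inter_left _ sdiff_subset))

theorem locallyConnected_compl_of_weaklyInfiniteDimensional_ellTwo_general [CompleteSpace E]
    (hE : ¬ FiniteDimensional ℝ E) (S : Set E) (hS : ¬ StronglyInfiniteDimensional S) :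
    LocallyConnectedSpace (Sᶜ : Set E) := by
  refine locallyConnectedSpace_of_connected_bases (fun x ρ => Metric.ball x ρ)
    (fun _ ρ => 0 < ρ) (fun x => Metric.nhds_basis_ball) fun x ρ _ => ?_
  rw [← Topology.IsInducing.subtypeVal.isPreconnected_image]
  have himage : ((↑) '' Metric.ball x ρ : Set E) = Metric.ball (x : E) ρ \ S := by
    rw [← Subtype.preimage_ball, Subtype.image_preimage_coe, inter_comm, sdiff_eq]
  rw [himage]
  exact isPreconnected_diff_of_weaklyInfiniteDimensional hE (convex_ball _ _) Metric.isOpen_ball hS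

end BanachSpace

theorem not_finiteDimensional_ellTwo : ¬ FiniteDimensional ℝ EllTwo := fun _ =>
  not_finite_iff_infinite.2 inferInstance
    ((default : HilbertBasis ℕ ℝ EllTwo).orthonormal.linearIndependent.finite)

/-- If `S ⊆ ℓ²` is weakly infinite dimensional, then `ℓ² \ S` is
locally connected. -/
theorem locallyConnected_compl_of_weaklyInfiniteDimensional_ellTwo
    (S : Set EllTwo) (hS : ¬ StronglyInfiniteDimensional S) :
    LocallyConnectedSpace (Sᶜ : Set EllTwo) :=
  locallyConnected_compl_of_weaklyInfiniteDimensional_ellTwo_general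
    not_finiteDimensional_ellTwo S hS
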